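/- For the non-HARA utility and any K > 0, the dual utility is given explicitly by Ũ_K(y) = sup_{x>K} { U(x−K) − x·y } = (1/3)·y^{−3} + y^{−1} − K·y for every y > 0, with the supremum attained at x = K + y^{−2} + y^{−4}. -/

import Mathlib

open Set Filter

/-!
Write `V y = y⁻³ / 3 + y⁻¹` and `I y = y⁻² + y⁻⁴`. Then `V` is convex on `(0, ∞)`, `V' = -I`, and
`H` is the inverse of `I`, while `U x = V (H x) + x * H x` by definition. Consequently `U x - x * y`
is the value at `y` of the tangent line to `V` at `H x`; it is at most `V y`, with equality when
`H x = y`, that is, when `x = I y`. The floor `K` merely translates the wealth variable, at the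
cost `K * y`.
-/

theorem add_mul_sub_le_of_convexOn_of_hasDerivWithinAt {s : Set ℝ} {f : ℝ → ℝ} {f' p y : ℝ}
    (hf : ConvexOn ℝ s f) (hp : p ∈ s) (hy : y ∈ s) (hf' : HasDerivWithinAt f f' s p) :
    f p + f' * (y - p) ≤ f y := by
  rcases lt_trichotomy p y with hpy | rfl | hyp
  · have hslope := hf.le_slope_of_hasDerivWithinAt hp hy hpy hf'
    rw [slope_def_field, le_div_iff₀ (sub_pos.2 hpy)] at hslope
    linarith
  · simp
  · have hslope := hf.slope_le_of_hasDerivWithinAt hy hp hyp hf'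
    rw [slope_def_field, div_le_iff₀ (sub_pos.2 hyp)] at hslope
    linarith

theorem isGreatest_image_sub_mul_of_convexOn {s t : Set ℝ} {V I H U : ℝ → ℝ} {y : ℝ}
    (hV : ConvexOn ℝ s V) (hV' : ∀ p ∈ s, HasDerivWithinAt V (-I p) s p)
    (hI : MapsTo I s t) (hH : MapsTo H t s) (hinv : InvOn I H t s)
    (hU : ∀ x ∈ t, U x = V (H x) + x * H x) (hy : y ∈ s) :
    IsGreatest ((fun x ↦ U x - x * y) '' t) (V y) := by
  refine ⟨⟨I y, hI hy, ?_⟩, ?_⟩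
  · simp only [hU _ (hI hy), hinv.2 hy, add_sub_cancel_right]
  · rintro _ ⟨x, hx, rfl⟩
    have htangent : V (H x) + -x * (y - H x) ≤ V y := by
      simpa only [hinv.1 hx] using
        add_mul_sub_le_of_convexOn_of_hasDerivWithinAt hV (hH hx) hy (hV' _ (hH hx))
    simp only [hU x hx]
    linarith

theorem isGreatest_sub_mul_of_floor {U : ℝ → ℝ} {y m : ℝ} (K : ℝ)
    (hm : IsGreatest ((fun x ↦ U x - x * y) '' Ioi 0) m) :
    IsGreatest {v : ℝ | ∃ x : ℝ, K < x ∧ v = U (x - K) - x * y} (m - K * y) := by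
  obtain ⟨⟨x₀, hx₀, rfl⟩, hub⟩ := hm
  refine ⟨⟨x₀ + K, lt_add_of_pos_left K hx₀, ?_⟩, ?_⟩
  · rw [add_sub_cancel_right]
    ring
  · rintro _ ⟨x, hx, rfl⟩
    have hle := hub (mem_image_of_mem (fun x ↦ U x - x * y) (mem_Ioi.2 (sub_pos.2 hx)))
    simp only at hle
    linarith

namespace NonHARA

/-- The dual `V y = y⁻³ / 3 + y⁻¹` of the non-HARA utility without floor, meaningful for `0 < y`. -/
noncomputable def dualUtility (y : ℝ) : ℝ :=
  (1 / 3) * y ^ (-3 : ℤ) + y⁻¹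

/-- The inverse `I y = y⁻² + y⁻⁴` of the marginal utility, meaningful for `0 < y`: the wealth at
which marginal utility equals `y`. -/
noncomputable def inverseMarginal (y : ℝ) : ℝ :=
  y ^ (-2 : ℤ) + y ^ (-4 : ℤ)

/-- The marginal utility of the non-HARA investor, meaningful for `0 < x`: the function `H` of the
statement, with the exponent `1 / 2` written as a square root. -/
noncomputable def marginalUtility (x : ℝ) : ℝ :=
  √(2 / (-1 + √(1 + 4 * x)))

theorem convexOn_dualUtility : ConvexOn ℝ (Ioi 0) dualUtility := by
  have hinv : ConvexOn ℝ (Ioi 0) fun y : ℝ ↦ y⁻¹ := by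
    simpa only [zpow_neg_one] using convexOn_zpow (𝕜 := ℝ) (-1)
  exact ((convexOn_zpow (-3)).smul (by norm_num : (0 : ℝ) ≤ 1 / 3)).add hinv

theorem hasDerivAt_dualUtility {y : ℝ} (hy : y ≠ 0) :
    HasDerivAt dualUtility (-inverseMarginal y) y := by
  have hsum := ((hasDerivAt_zpow (-3) y (.inl hy)).const_mul (1 / 3)).add (hasDerivAt_inv hy)
  refine hsum.congr_deriv ?_
  rw [inverseMarginal, show (-3 : ℤ) - 1 = -4 by norm_num, zpow_neg y 2, zpow_ofNat]
  push_cast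
  ring

theorem inverseMarginal_pos {y : ℝ} (hy : 0 < y) : 0 < inverseMarginal y := by
  unfold inverseMarginal
  positivity

theorem one_lt_sqrt_one_add_four_mul {x : ℝ} (hx : 0 < x) : 1 < √(1 + 4 * x) :=
  Real.lt_sqrt_of_sq_lt (by linarith)

theorem marginalUtility_pos {x : ℝ} (hx : 0 < x) : 0 < marginalUtility x :=
  Real.sqrt_pos.2 (div_pos two_pos (by linarith [one_lt_sqrt_one_add_four_mul hx]))

theorem marginalUtility_zpow_neg_two {x : ℝ} (hx : 0 < x) :
    marginalUtility x ^ (-2 : ℤ) = (√(1 + 4 * x) - 1) / 2 := by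
  have hpos : 0 ≤ 2 / (-1 + √(1 + 4 * x)) :=
    div_nonneg two_pos.le (by linarith [one_lt_sqrt_one_add_four_mul hx])
  rw [zpow_neg, zpow_ofNat, marginalUtility, Real.sq_sqrt hpos, inv_div, neg_add_eq_sub]

-- `q = H x ^ (-2)` is the positive root of the quadratic `q + q ^ 2 = x`.
theorem inverseMarginal_marginalUtility {x : ℝ} (hx : 0 < x) :
    inverseMarginal (marginalUtility x) = x := by
  have hsq : √(1 + 4 * x) ^ 2 = 1 + 4 * x := Real.sq_sqrt (by linarith)
  rw [inverseMarginal, show (-4 : ℤ) = -2 * 2 by norm_num, zpow_mul,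
    marginalUtility_zpow_neg_two hx, zpow_ofNat]
  linarith

theorem marginalUtility_inverseMarginal {y : ℝ} (hy : 0 < y) :
    marginalUtility (inverseMarginal y) = y := by
  have hsquare : 1 + 4 * inverseMarginal y = (1 + 2 * y ^ (-2 : ℤ)) ^ 2 := by
    rw [inverseMarginal, show (-4 : ℤ) = -2 * 2 by norm_num, zpow_mul, zpow_ofNat _ 2]
    ring
  have hquot : 2 / (-1 + (1 + 2 * y ^ (-2 : ℤ))) = y ^ 2 := by
    rw [neg_add_cancel_left, zpow_neg, zpow_ofNat]
    field_simp
  rw [marginalUtility, hsquare, Real.sqrt_sq (by positivity), hquot, Real.sqrt_sq hy.le]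

theorem isGreatest_image_sub_mul {U : ℝ → ℝ} {y : ℝ}
    (hU : ∀ x, 0 < x → U x = dualUtility (marginalUtility x) + x * marginalUtility x)
    (hy : 0 < y) :
    IsGreatest ((fun x ↦ U x - x * y) '' Ioi 0) (dualUtility y) :=
  isGreatest_image_sub_mul_of_convexOn convexOn_dualUtility
    (fun _ hp ↦ (hasDerivAt_dualUtility (ne_of_gt hp)).hasDerivWithinAt)
    (fun _ ↦ inverseMarginal_pos) (fun _ ↦ marginalUtility_pos)
    ⟨fun _ ↦ inverseMarginal_marginalUtility, fun _ ↦ marginalUtility_inverseMarginal⟩ hU hy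

end NonHARA

open NonHARA in
theorem nonHARA_utility_dual_general
    (K : ℝ) (H U : ℝ → ℝ)
    (hH : ∀ x : ℝ, 0 < x → H x = Real.sqrt (2 / (-1 + Real.sqrt (1 + 4 * x))))
    (hU : ∀ x : ℝ, 0 < x → U x = (1 / 3) * (H x) ^ (-3 : ℤ) + (H x)⁻¹ + x * H x)
    (y : ℝ) (hy : 0 < y) :
    IsGreatest {v : ℝ | ∃ x : ℝ, K < x ∧ v = U (x - K) - x * y}
      ((1 / 3) * y ^ (-3 : ℤ) + y⁻¹ - K * y) ∧
    sSup {v : ℝ | ∃ x : ℝ, K < x ∧ v = U (x - K) - x * y}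
      = (1 / 3) * y ^ (-3 : ℤ) + y⁻¹ - K * y ∧
    K < K + y ^ (-2 : ℤ) + y ^ (-4 : ℤ) ∧
    U (K + y ^ (-2 : ℤ) + y ^ (-4 : ℤ) - K) - (K + y ^ (-2 : ℤ) + y ^ (-4 : ℤ)) * y
      = (1 / 3) * y ^ (-3 : ℤ) + y⁻¹ - K * y := by
  have hU' (x : ℝ) (hx : 0 < x) :
      U x = dualUtility (marginalUtility x) + x * marginalUtility x := by
    rw [hU x hx, hH x hx]
    rfl
  have hgreatest := isGreatest_sub_mul_of_floor K (isGreatest_image_sub_mul hU' hy)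
  have hI := inverseMarginal_pos hy
  have hmaximizer : K + y ^ (-2 : ℤ) + y ^ (-4 : ℤ) = K + inverseMarginal y := add_assoc _ _ _
  refine ⟨hgreatest, hgreatest.csSup_eq, hmaximizer ▸ lt_add_of_pos_right K hI, ?_⟩
  rw [hmaximizer, add_sub_cancel_left, hU' _ hI, marginalUtility_inverseMarginal hy, dualUtility]
  ring

/-- For the non-HARA utility and any `K > 0`, the dual utility is
`Ũ_K(y) = (1/3) y⁻³ + y⁻¹ - K y`, the supremum being attained at `x* = K + y⁻² + y⁻⁴`. -/
theorem nonHARA_utility_dual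
    (K : ℝ) (hK : 0 < K)
    (H U : ℝ → ℝ)
    (hH : ∀ x : ℝ, H x = Real.sqrt (2 / (-1 + Real.sqrt (1 + 4 * x))))
    (hU : ∀ x : ℝ, 0 < x → U x = (1 / 3) * (H x) ^ (-3 : ℤ) + (H x)⁻¹ + x * H x)
    (hU0 : U 0 = 0) :
    ∀ y : ℝ, 0 < y →
      IsGreatest {v : ℝ | ∃ x : ℝ, K < x ∧ v = U (x - K) - x * y}
        ((1 / 3) * y ^ (-3 : ℤ) + y⁻¹ - K * y) ∧
      sSup {v : ℝ | ∃ x : ℝ, K < x ∧ v = U (x - K) - x * y}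
        = (1 / 3) * y ^ (-3 : ℤ) + y⁻¹ - K * y ∧
      K < K + y ^ (-2 : ℤ) + y ^ (-4 : ℤ) ∧
      U (K + y ^ (-2 : ℤ) + y ^ (-4 : ℤ) - K) - (K + y ^ (-2 : ℤ) + y ^ (-4 : ℤ)) * y
        = (1 / 3) * y ^ (-3 : ℤ) + y⁻¹ - K * y :=
  nonHARA_utility_dual_general K H U (fun x _ ↦ hH x) hU
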